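/- For every a' ∈ A with ρ_{a'} < 1, the Green's function of A ∪ B satisfies G_{A∪B}(a',a') ≤ G_A(a',a') / (1 − ρ_{a'}), where ρ_{a'} = P^{a'}(T_B < T_C and the walk returns from B to A before hitting C). -/

import Mathlib

open MeasureTheory ENNReal

/-- The first hitting time of the set `D` along the path `s`, valued in `ℕ∞`
(`⊤` if the path never visits `D`). -/
noncomputable def hitTime {Ω : Type*} (D : Set Ω) (s : ℕ → Ω) : ℕ∞ :=
  ⨅ (k : ℕ) (_ : s k ∈ D), (k : ℕ∞)

/-- The path of the walk started at `x` with steps `ξ` : `S_n = x + ∑_{j<n} ξ j`. -/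
def walk {Ω : Type*} [AddCommGroup Ω] (x : Ω) (ξ : ℕ → Ω) (n : ℕ) : Ω :=
  x + ∑ j ∈ Finset.range n, ξ j

/-- A random walk on a group `Ω`, described by the common law `ν` of its i.i.d.
steps together with the joint law `μ` of the step sequence (characterized on
cylinder sets as the product of `ν`'s). -/
structure RandomWalk (Ω : Type*) [AddCommGroup Ω] [MeasurableSpace Ω] where
  ν : Measure Ω
  probν : IsProbabilityMeasure ν
  μ : Measure (ℕ → Ω)
  probμ : IsProbabilityMeasure μ
  iid : ∀ (n : ℕ) (f : Fin n → Ω),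
    μ {ξ | ∀ i : Fin n, ξ (i : ℕ) = f i} = ∏ i : Fin n, ν {f i}

variable {Ω : Type*} [AddCommGroup Ω] [MeasurableSpace Ω]

/-- `P^x(θ)` : the probability that the path `(S_n)` of the walk started at `x`
has the property `θ`. -/
noncomputable def RandomWalk.P (W : RandomWalk Ω) (x : Ω) (θ : Set (ℕ → Ω)) : ℝ≥0∞ :=
  W.μ {ξ | walk x ξ ∈ θ}

/-- `E^x(T_D)` : the expected hitting time of `D` for the walk started at `x`. -/
noncomputable def RandomWalk.E (W : RandomWalk Ω) (x : Ω) (D : Set Ω) : ℝ≥0∞ :=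
  ∫⁻ ξ, (hitTime D (walk x ξ) : ℝ≥0∞) ∂W.μ

/-- The truncated Green's function `G_D(x,y) = ∑_{j≥0} P^x(S_j = y, j < T_{Dᶜ})`. -/
noncomputable def RandomWalk.G (W : RandomWalk Ω) (D : Set Ω) (x y : Ω) : ℝ≥0∞ :=
  ∑' j : ℕ, W.P x {s | s j = y ∧ (j : ℕ∞) < hitTime Dᶜ s}

/-- The hitting distribution `H_D(x,y) = P^x(S_{T_D} = y)`. -/
noncomputable def RandomWalk.H (W : RandomWalk Ω) (D : Set Ω) (x y : Ω) : ℝ≥0∞ :=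
  W.P x {s | ∃ k : ℕ, hitTime D s = (k : ℕ∞) ∧ s k = y}

/-!
Cut a path that stays in `A ∪ B` and is at `a` at time `n` according to whether it has left `A`
by time `n`. If not, it contributes to `G_A(a,a)`. If so, cut it once more at its first visit to
`a` after leaving `A`; by the Markov property the law `r` of the time of that visit satisfies
`v_n ≤ u_n + ∑_{t+m=n} r_t v_m`, where `v_n` and `u_n` are the `n`-th terms of `G_{A∪B}(a,a)` and
`G_A(a,a)`. To make the visit the walk must hit `B` and return to `A` before it hits `C`, so
`∑ r_t ≤ ρ_a` by the strong Markov property. Summing the renewal inequality over `n < N`, where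
everything is finite, gives `∑ v_n ≤ ∑ u_n / (1 - ∑ r_t)`.
-/

open scoped Function
open Finset.HasAntidiagonal (antidiagonal mem_antidiagonal)

section Paths

variable {α : Type*} {D E : Set α} {s : ℕ → α} {n : ℕ}

theorem natCast_le_hitTime_iff : (n : ℕ∞) ≤ hitTime D s ↔ ∀ i < n, s i ∉ D := by
  simp only [hitTime, le_iInf_iff, Nat.cast_le]
  exact forall_congr' fun i ↦ by rw [← not_imp_not, not_le]

theorem natCast_lt_hitTime_iff : (n : ℕ∞) < hitTime D s ↔ ∀ i ≤ n, s i ∉ D := by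
  rw [← ENat.add_one_le_iff (ENat.natCast_ne_top n)]
  simpa only [Nat.lt_succ_iff, Nat.cast_succ] using natCast_le_hitTime_iff (n := n + 1)

theorem hitTime_le_natCast_iff : hitTime D s ≤ n ↔ ∃ i ≤ n, s i ∈ D := by
  simpa only [not_lt, not_forall, not_not, exists_prop] using natCast_lt_hitTime_iff.not

theorem mem_of_hitTime_eq (h : hitTime D s = n) : s n ∈ D := by
  obtain ⟨i, hin, hi⟩ := hitTime_le_natCast_iff.1 h.le
  obtain rfl : i = n :=
    hin.antisymm (le_of_not_gt fun hlt ↦ natCast_le_hitTime_iff.1 h.ge i hlt hi)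
  exact hi

theorem hitTime_lt_hitTime_iff :
    hitTime D s < hitTime E s ↔ ∃ m : ℕ, hitTime D s ≤ m ∧ m < hitTime E s := by
  refine ⟨fun h ↦ ?_, fun ⟨m, hD, hE⟩ ↦ hD.trans_lt hE⟩
  lift hitTime D s to ℕ using h.ne_top with m
  exact ⟨m, le_rfl, h⟩

theorem dependsOn_hitTime_le (D : Set α) (n : ℕ) :
    DependsOn (fun s ↦ hitTime D s ≤ n) (Set.Iic n) := by
  intro s s' h
  simp only [hitTime_le_natCast_iff]
  exact propext <| exists_congr fun i ↦ and_congr_right fun hi ↦ by rw [h i hi]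

theorem dependsOn_natCast_lt_hitTime (D : Set α) (n : ℕ) :
    DependsOn (fun s ↦ n < hitTime D s) (Set.Iic n) := by
  intro s s' h
  simpa only [not_le] using congrArg Not (dependsOn_hitTime_le D n h)

/-- The path `s` seen from time `n` on. -/
def shift (n : ℕ) (s : ℕ → α) : ℕ → α := fun i ↦ s (n + i)

/-- The event `S_{T_D} = y`, `T_D = n`. -/
def hitAt (D : Set α) (y : α) (n : ℕ) : Set (ℕ → α) :=
  {s | hitTime D s = n ∧ s n = y}

/-- The event `S_n = y`, `n < T_{Dᶜ}`, whose probabilities add up to the Green's function. -/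
def visitBeforeExit (D : Set α) (y : α) (n : ℕ) : Set (ℕ → α) :=
  {s | s n = y ∧ n < hitTime Dᶜ s}

/-- The event that `n` is the first time in `[T_{Dᶜ}, T_{Eᶜ})` at which the path is at `y`. -/
def firstVisitBetweenExits (D E : Set α) (y : α) (n : ℕ) : Set (ℕ → α) :=
  {s | (s n = y ∧ hitTime Dᶜ s ≤ n ∧ n < hitTime Eᶜ s) ∧
    ∀ i < n, hitTime Dᶜ s ≤ i → s i ≠ y}

theorem dependsOn_mem_hitAt (D : Set α) (y : α) (n : ℕ) :
    DependsOn (· ∈ hitAt D y n) (Set.Iic n) := by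
  intro s s' h
  have hge : (n ≤ hitTime D s) = (n ≤ hitTime D s') := by
    simp only [natCast_le_hitTime_iff]
    exact propext <| forall₂_congr fun i hi ↦ by rw [h i hi.le]
  simp only [hitAt, Set.mem_ofPred_eq, le_antisymm_iff, dependsOn_hitTime_le D n h, hge,
    h n Set.self_mem_Iic]

theorem dependsOn_mem_visitBeforeExit (D : Set α) (y : α) (n : ℕ) :
    DependsOn (· ∈ visitBeforeExit D y n) (Set.Iic n) := by
  intro s s' h
  simp only [visitBeforeExit, Set.mem_ofPred_eq, dependsOn_natCast_lt_hitTime Dᶜ n h,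
    h n Set.self_mem_Iic]

theorem dependsOn_mem_firstVisitBetweenExits (D E : Set α) (y : α) (n : ℕ) :
    DependsOn (· ∈ firstVisitBetweenExits D E y n) (Set.Iic n) := by
  intro s s' h
  have hlt : (∀ i < n, hitTime Dᶜ s ≤ i → s i ≠ y) = ∀ i < n, hitTime Dᶜ s' ≤ i → s' i ≠ y := by
    refine propext <| forall₂_congr fun i hi ↦ ?_
    have hi' : ∀ k ∈ Set.Iic i, s k = s' k := fun k hk ↦ h k (hk.trans hi.le)
    simp only [dependsOn_hitTime_le Dᶜ i hi', h i hi.le]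
  simp only [firstVisitBetweenExits, Set.mem_ofPred_eq, dependsOn_hitTime_le Dᶜ n h,
    dependsOn_natCast_lt_hitTime Eᶜ n h, h n Set.self_mem_Iic, hlt]

theorem pairwise_disjoint_hitAt (D : Set α) (y : α) :
    Pairwise (Disjoint on (hitAt D y)) := fun _ _ hmn ↦
  Set.disjoint_left.2 fun _ hm hn ↦ hmn (Nat.cast_injective (hm.1.symm.trans hn.1))

theorem pairwise_disjoint_firstVisitBetweenExits (D E : Set α) (y : α) :
    Pairwise (Disjoint on (firstVisitBetweenExits D E y)) := fun m n hmn ↦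
  Set.disjoint_left.2 fun _ hm hn ↦ hmn.lt_or_gt.elim
    (fun hlt ↦ hn.2 m hlt hm.1.2.1 hm.1.1) (fun hlt ↦ hm.2 n hlt hn.1.2.1 hn.1.1)

theorem visitBeforeExit_subset (D E : Set α) (y : α) (n : ℕ) :
    visitBeforeExit E y n ⊆ visitBeforeExit D y n ∪ ⋃ p ∈ antidiagonal n,
      firstVisitBetweenExits D E y p.1 ∩ shift p.1 ⁻¹' visitBeforeExit E y p.2 := by
  classical
  rintro s ⟨hsn, hnE⟩
  rw [natCast_lt_hitTime_iff] at hnE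
  rcases lt_or_ge (n : ℕ∞) (hitTime Dᶜ s) with hnD | hnD
  · exact Or.inl ⟨hsn, hnD⟩
  have hex : ∃ t : ℕ, s t = y ∧ hitTime Dᶜ s ≤ t := ⟨n, hsn, hnD⟩
  obtain ⟨t, ⟨hst, hDt⟩, htn, htmin⟩ : ∃ t : ℕ, (s t = y ∧ hitTime Dᶜ s ≤ t) ∧ t ≤ n ∧
      ∀ i < t, ¬ (s i = y ∧ hitTime Dᶜ s ≤ i) :=
    ⟨Nat.find hex, Nat.find_spec hex, Nat.find_min' hex ⟨hsn, hnD⟩, fun _ ↦ Nat.find_min hex⟩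
  obtain ⟨m, rfl⟩ := Nat.exists_eq_add_of_le htn
  refine Or.inr <| Set.mem_biUnion (x := (t, m)) (mem_antidiagonal.2 rfl) ⟨⟨⟨hst, hDt, ?_⟩,
    fun i hit hDi hsi ↦ htmin i hit ⟨hsi, hDi⟩⟩, hsn, ?_⟩ <;> rw [natCast_lt_hitTime_iff]
  · exact fun i hi ↦ hnE i (by lia)
  · exact fun i hi ↦ hnE (t + i) (by lia)

theorem firstVisitBetweenExits_subset {A B C : Set α} {y : α} (hC : Disjoint (A ∪ B) C)
    (hy : y ∈ A) (n : ℕ) :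
    firstVisitBetweenExits A (A ∪ B) y n ⊆ ⋃ b : B, ⋃ k : ℕ,
      hitAt (B ∪ C) b k ∩ shift k ⁻¹' {s | hitTime A s < hitTime C s} := by
  rintro s ⟨⟨hsn, hAn, hnAB⟩, -⟩
  have hstay : ∀ i ≤ n, s i ∈ A ∪ B := by
    simpa only [natCast_lt_hitTime_iff, Set.mem_compl_iff, not_not] using hnAB
  have hsC : ∀ i ≤ n, s i ∉ C := fun i hi ↦ hC.notMem_of_mem_left (hstay i hi)
  have hit : hitTime (B ∪ C) s ≤ n := by
    obtain ⟨i, hi, hiA⟩ := hitTime_le_natCast_iff.1 hAn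
    exact hitTime_le_natCast_iff.2 ⟨i, hi, Or.inl ((hstay i hi).resolve_left hiA)⟩
  obtain ⟨k, hk⟩ := ENat.ne_top_iff_exists.1 (ne_top_of_le_ne_top (ENat.natCast_ne_top n) hit)
  have hkn : k ≤ n := by rwa [← hk, Nat.cast_le] at hit
  have hkB : s k ∈ B := (mem_of_hitTime_eq hk.symm).resolve_right (hsC k hkn)
  obtain ⟨m, rfl⟩ := Nat.exists_eq_add_of_le hkn
  refine Set.mem_iUnion₂.2 ⟨⟨s k, hkB⟩, k, ⟨hk.symm, rfl⟩, hitTime_lt_hitTime_iff.2 ⟨m, ?_, ?_⟩⟩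
  · exact hitTime_le_natCast_iff.2 ⟨m, le_rfl, show s (k + m) ∈ A from hsn ▸ hy⟩
  · exact natCast_lt_hitTime_iff.2 fun i hi ↦ hsC (k + i) (by lia)

end Paths

section Measurability

theorem isPiSystem_cylinder {β : ℕ → Type*} :
    IsPiSystem {t | ∃ (x : ∀ n, β n) (n : ℕ), t = PiNat.cylinder x n} := by
  rintro _ ⟨x, m, rfl⟩ _ ⟨y, n, rfl⟩ ⟨z, hzx, hzy⟩
  rw [← PiNat.mem_cylinder_iff_eq.1 hzx, ← PiNat.mem_cylinder_iff_eq.1 hzy]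
  rcases le_total m n with h | h
  · exact ⟨z, n, Set.inter_eq_right.2 (PiNat.cylinder_anti z h)⟩
  · exact ⟨z, m, Set.inter_eq_left.2 (PiNat.cylinder_anti z h)⟩

variable {α : Type*} [MeasurableSpace α]

theorem measurable_shift (n : ℕ) : Measurable (shift n : (ℕ → α) → ℕ → α) :=
  measurable_pi_lambda _ fun i ↦ measurable_pi_apply (n + i)

theorem measurable_domRestrict {ι : Type*} (I : Set ι) :
    Measurable (I.domRestrict : (ι → α) → I → α) :=
  measurable_pi_lambda _ fun i ↦ measurable_pi_apply i.1

variable [Countable α] [MeasurableSingletonClass α]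

theorem measurableSet_of_dependsOn {ι : Type*} {I : Set ι} [Finite I] {F : Set (ι → α)}
    (hF : DependsOn (· ∈ F) I) : MeasurableSet F := by
  obtain ⟨g, hg⟩ := dependsOn_iff_exists_comp.1 hF
  have : F = I.domRestrict ⁻¹' {c | g c} := Set.ext fun s ↦ (congrFun hg s).to_iff
  exact this ▸ measurable_domRestrict I (Set.to_countable _).measurableSet

theorem measurableSet_hitTime_lt_hitTime (D E : Set α) :
    MeasurableSet {s | hitTime D s < hitTime E s} := by
  simp only [hitTime_lt_hitTime_iff, Set.ofPred_exists]
  exact .iUnion fun m ↦ (measurableSet_of_dependsOn (dependsOn_hitTime_le D m)).inter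
    (measurableSet_of_dependsOn (dependsOn_natCast_lt_hitTime E m))

theorem measurableSet_cylinder (s : ℕ → α) (n : ℕ) : MeasurableSet (PiNat.cylinder s n) :=
  measurableSet_of_dependsOn (I := Set.Iio n) fun _ _ h ↦
    propext <| forall₂_congr fun i hi ↦ by rw [h i hi]

theorem pi_eq_generateFrom_cylinder : (MeasurableSpace.pi : MeasurableSpace (ℕ → α)) =
    .generateFrom {t | ∃ (x : ℕ → α) (n : ℕ), t = PiNat.cylinder x n} := by
  let _ : TopologicalSpace α := ⊥
  have : DiscreteTopology α := ⟨rfl⟩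
  rw [← (PiNat.isTopologicalBasis_cylinders _).borel_eq_generateFrom]
  exact BorelSpace.measurable_eq

end Measurability

section Renewal

theorem sum_range_sum_antidiagonal_mul_le {R : Type*} [NonUnitalNonAssocSemiring R]
    [PartialOrder R] [CanonicallyOrderedAdd R] (f g : ℕ → R) (N : ℕ) :
    ∑ n ∈ Finset.range N, ∑ p ∈ antidiagonal n, f p.1 * g p.2 ≤
      (∑ n ∈ Finset.range N, f n) * ∑ n ∈ Finset.range N, g n := by
  have hfiber : ∀ n ∈ Finset.range N, antidiagonal n =
      {p ∈ Finset.range N ×ˢ Finset.range N | p.1 + p.2 = n} := by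
    intro n hn
    ext p
    simp only [mem_antidiagonal, Finset.mem_filter, Finset.mem_product, Finset.mem_range] at hn ⊢
    lia
  calc ∑ n ∈ Finset.range N, ∑ p ∈ antidiagonal n, f p.1 * g p.2
      = ∑ n ∈ Finset.range N, ∑ p ∈ Finset.range N ×ˢ Finset.range N with p.1 + p.2 = n,
          f p.1 * g p.2 := Finset.sum_congr rfl fun n hn ↦ by rw [hfiber n hn]
    _ ≤ ∑ p ∈ Finset.range N ×ˢ Finset.range N, f p.1 * g p.2 :=
        Finset.sum_fiberwise_le_sum_of_sum_fiber_nonneg fun _ _ ↦ zero_le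
    _ = _ := by rw [Finset.sum_product, ← Finset.sum_mul_sum]

theorem tsum_le_div_of_renewal {u r v : ℕ → ℝ≥0∞} (hv : ∀ n, v n ≠ ∞) (hr : ∑' n, r n < 1)
    (h : ∀ n, v n ≤ u n + ∑ p ∈ antidiagonal n, r p.1 * v p.2) :
    ∑' n, v n ≤ (∑' n, u n) / (1 - ∑' n, r n) := by
  rw [ENNReal.tsum_eq_iSup_nat]
  refine iSup_le fun N ↦ ?_
  have hfin : ∑ n ∈ Finset.range N, v n ≠ ∞ := ENNReal.sum_ne_top.2 fun n _ ↦ hv n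
  have hrec : ∑ n ∈ Finset.range N, v n ≤
      ∑' n, u n + (∑' n, r n) * ∑ n ∈ Finset.range N, v n :=
    calc ∑ n ∈ Finset.range N, v n
        ≤ ∑ n ∈ Finset.range N, u n +
            ∑ n ∈ Finset.range N, ∑ p ∈ antidiagonal n, r p.1 * v p.2 := by
          rw [← Finset.sum_add_distrib]
          exact Finset.sum_le_sum fun n _ ↦ h n
      _ ≤ ∑ n ∈ Finset.range N, u n +
            (∑ n ∈ Finset.range N, r n) * ∑ n ∈ Finset.range N, v n := by
          gcongr
          exact sum_range_sum_antidiagonal_mul_le r v N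
      _ ≤ _ := by gcongr <;> exact ENNReal.sum_le_tsum _
  rw [ENNReal.le_div_iff_mul_le (.inl (tsub_pos_of_lt hr).ne')
    (.inl (ENNReal.sub_ne_top ENNReal.one_ne_top)), ENNReal.mul_sub fun _ _ ↦ hfin, mul_one,
    mul_comm]
  exact tsub_le_iff_right.2 hrec

end Renewal

section Walk

variable {G : Type*} [AddCommGroup G]

theorem dependsOn_walk (x : G) (n : ℕ) : DependsOn (fun ξ ↦ walk x ξ n) (Set.Iio n) :=
  fun _ _ h ↦ congrArg (x + ·) <| Finset.sum_congr rfl fun i hi ↦ h i (Finset.mem_range.1 hi)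

theorem shift_walk (x : G) (ξ : ℕ → G) (n : ℕ) :
    shift n (walk x ξ) = walk (walk x ξ n) (shift n ξ) :=
  funext fun i ↦ by simp only [shift, walk, Finset.sum_range_add, add_assoc]

theorem measurable_walk [Countable G] [MeasurableSpace G] [MeasurableSingletonClass G] (x : G) :
    Measurable (walk x) := by
  refine measurable_pi_lambda _ fun n ↦ ?_
  exact (Finset.measurable_fun_sum _ fun i _ ↦ measurable_pi_apply i).const_add x

end Walk

namespace RandomWalk

variable (W : RandomWalk Ω)

theorem μ_cylinder (ξ : ℕ → Ω) (n : ℕ) :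
    W.μ (PiNat.cylinder ξ n) = ∏ i ∈ Finset.range n, W.ν {ξ i} := by
  rw [← Fin.prod_univ_eq_prod_range (fun i ↦ W.ν {ξ i}), ← W.iid n fun i ↦ ξ i]
  simp only [PiNat.cylinder, Fin.forall_iff]

theorem P_eq_preimage (x : Ω) (F : Set (ℕ → Ω)) : W.P x F = W.μ (walk x ⁻¹' F) := rfl

theorem P_mono (x : Ω) {F F' : Set (ℕ → Ω)} (h : F ⊆ F') : W.P x F ≤ W.P x F' :=
  measure_mono <| Set.preimage_mono h

theorem P_ne_top (x : Ω) (F : Set (ℕ → Ω)) : W.P x F ≠ ∞ :=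
  have := W.probμ
  measure_ne_top _ _

theorem P_iUnion_le {ι : Type*} [Countable ι] (x : Ω) (F : ι → Set (ℕ → Ω)) :
    W.P x (⋃ i, F i) ≤ ∑' i, W.P x (F i) := by
  rw [P_eq_preimage, Set.preimage_iUnion]
  exact measure_iUnion_le _

theorem P_biUnion_finset_le {ι : Type*} (x : Ω) (I : Finset ι) (F : ι → Set (ℕ → Ω)) :
    W.P x (⋃ i ∈ I, F i) ≤ ∑ i ∈ I, W.P x (F i) := by
  rw [P_eq_preimage, Set.preimage_iUnion₂]
  exact measure_biUnion_finset_le _ _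

theorem P_union_le (x : Ω) (F F' : Set (ℕ → Ω)) : W.P x (F ∪ F') ≤ W.P x F + W.P x F' :=
  measure_union_le _ _

theorem μ_cylinder_inter_shift_preimage_cylinder (ξ η : ℕ → Ω) (m n : ℕ) :
    W.μ (PiNat.cylinder ξ n ∩ shift n ⁻¹' PiNat.cylinder η m) =
      W.μ (PiNat.cylinder ξ n) * W.μ (PiNat.cylinder η m) := by
  set ζ : ℕ → Ω := fun i ↦ if i < n then ξ i else η (i - n) with hζ
  have hconcat : PiNat.cylinder ξ n ∩ shift n ⁻¹' PiNat.cylinder η m =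
      PiNat.cylinder ζ (n + m) := by
    ext κ
    simp only [Set.mem_inter_iff, Set.mem_preimage, PiNat.mem_cylinder_iff, shift]
    refine ⟨fun ⟨hξ, hη⟩ i hi ↦ ?_, fun h ↦ ⟨fun i hi ↦ ?_, fun i hi ↦ ?_⟩⟩
    · rcases lt_or_ge i n with hin | hin
      · simpa [hζ, hin] using hξ i hin
      · obtain ⟨k, rfl⟩ := Nat.exists_eq_add_of_le hin
        simpa [hζ] using hη k (by lia)
    · simpa [hζ, hi] using h i (by lia)
    · simpa [hζ] using h (n + i) (by lia)
  rw [hconcat, μ_cylinder, μ_cylinder, μ_cylinder, Finset.prod_range_add]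
  congr 1
  · exact Finset.prod_congr rfl fun i hi ↦ by simp [hζ, Finset.mem_range.1 hi]
  · simp [hζ]

variable [Countable Ω] [MeasurableSingletonClass Ω]

theorem P_iUnion {ι : Type*} [Countable ι] (x : Ω) {F : ι → Set (ℕ → Ω)}
    (hF : ∀ i, MeasurableSet (F i)) (hd : Pairwise (Disjoint on F)) :
    W.P x (⋃ i, F i) = ∑' i, W.P x (F i) := by
  rw [P_eq_preimage, Set.preimage_iUnion]
  exact measure_iUnion (fun i j hij ↦ (hd hij).preimage _) fun i ↦ measurable_walk x (hF i)

theorem μ_cylinder_inter_shift_preimage (ξ : ℕ → Ω) (n : ℕ) {E : Set (ℕ → Ω)}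
    (hE : MeasurableSet E) :
    W.μ (PiNat.cylinder ξ n ∩ shift n ⁻¹' E) = W.μ (PiNat.cylinder ξ n) * W.μ E := by
  have := W.probμ
  have hlaw : (W.μ.restrict (PiNat.cylinder ξ n)).map (shift n) =
      W.μ (PiNat.cylinder ξ n) • W.μ := by
    refine ext_of_generate_finite _ pi_eq_generateFrom_cylinder isPiSystem_cylinder ?_ ?_
    · rintro _ ⟨η, m, rfl⟩
      rw [Measure.map_apply (measurable_shift n) (measurableSet_cylinder η m),
        Measure.restrict_apply (measurable_shift n (measurableSet_cylinder η m)), Set.inter_comm,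
        μ_cylinder_inter_shift_preimage_cylinder, Measure.smul_apply, smul_eq_mul]
    · simp [Measure.map_apply (measurable_shift n) .univ]
  simpa [Measure.map_apply (measurable_shift n) hE, Measure.restrict_apply (measurable_shift n hE),
    Set.inter_comm] using congrArg (· E) hlaw

theorem μ_inter_shift_preimage {n : ℕ} {F E : Set (ℕ → Ω)}
    (hF : DependsOn (· ∈ F) (Set.Iio n)) (hE : MeasurableSet E) :
    W.μ (F ∩ shift n ⁻¹' E) = W.μ F * W.μ E := by
  let past : (ℕ → Ω) → Set.Iio n → Ω := (Set.Iio n).domRestrict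
  have hpast : Measurable past := measurable_domRestrict _
  have hlaw : (W.μ.restrict (shift n ⁻¹' E)).map past = W.μ E • W.μ.map past := by
    refine Measure.ext_of_singleton fun c ↦ ?_
    obtain ⟨ξ, rfl⟩ : ∃ ξ, past ξ = c := Subtype.surjective_restrict (β := fun _ ↦ Ω) (· < n) c
    have hcyl : past ⁻¹' {past ξ} = PiNat.cylinder ξ n := by
      ext η
      simp [past, PiNat.mem_cylinder_iff, Set.domRestrict_eq_iff]
    have hmeas := hpast (measurableSet_singleton (past ξ))
    rw [Measure.smul_apply, smul_eq_mul, Measure.map_apply hpast (measurableSet_singleton _),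
      Measure.map_apply hpast (measurableSet_singleton _), Measure.restrict_apply hmeas, hcyl,
      W.μ_cylinder_inter_shift_preimage ξ n hE, mul_comm]
  obtain ⟨g, hg⟩ := dependsOn_iff_exists_comp.1 hF
  obtain rfl : F = past ⁻¹' {c | g c} := Set.ext fun s ↦ (congrFun hg s).to_iff
  have hS : MeasurableSet {c | g c} := (Set.to_countable _).measurableSet
  calc W.μ (past ⁻¹' {c | g c} ∩ shift n ⁻¹' E)
      = (W.μ.restrict (shift n ⁻¹' E)).map past {c | g c} := by
        rw [Measure.map_apply hpast hS, Measure.restrict_apply (hpast hS)]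
    _ = W.μ (past ⁻¹' {c | g c}) * W.μ E := by
        rw [hlaw, Measure.smul_apply, smul_eq_mul, Measure.map_apply hpast hS, mul_comm]

theorem markov_property {n : ℕ} {x y : Ω} {F E : Set (ℕ → Ω)}
    (hF : DependsOn (· ∈ F) (Set.Iic n)) (hy : ∀ s ∈ F, s n = y) (hE : MeasurableSet E) :
    W.P x (F ∩ shift n ⁻¹' E) = W.P x F * W.P y E := by
  have hsteps : DependsOn (· ∈ walk x ⁻¹' F) (Set.Iio n) := fun ξ η h ↦
    hF fun i hi ↦ dependsOn_walk x i fun k hk ↦ h k (lt_of_lt_of_le (Set.mem_Iio.1 hk) hi)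
  have hrestart : walk x ⁻¹' (F ∩ shift n ⁻¹' E) =
      walk x ⁻¹' F ∩ shift n ⁻¹' (walk y ⁻¹' E) := by
    ext ξ
    refine and_congr_right fun hξ ↦ ?_
    rw [Set.mem_preimage, shift_walk, hy _ hξ]
    rfl
  simp only [P_eq_preimage, hrestart, W.μ_inter_shift_preimage hsteps (measurable_walk y hE)]

theorem H_eq_tsum (D : Set Ω) (x y : Ω) : W.H D x y = ∑' n, W.P x (hitAt D y n) := by
  rw [← W.P_iUnion x (fun n ↦ measurableSet_of_dependsOn (dependsOn_mem_hitAt D y n))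
    (pairwise_disjoint_hitAt D y)]
  simp only [H, hitAt, Set.ofPred_exists]

theorem strong_markov_hitTime (D : Set Ω) (x y : Ω) {E : Set (ℕ → Ω)} (hE : MeasurableSet E) :
    W.P x (⋃ n, hitAt D y n ∩ shift n ⁻¹' E) = W.H D x y * W.P y E := by
  have hmeas (n : ℕ) : MeasurableSet (hitAt D y n ∩ shift n ⁻¹' E) :=
    (measurableSet_of_dependsOn (dependsOn_mem_hitAt D y n)).inter (measurable_shift n hE)
  have hdisj : Pairwise (Disjoint on fun n ↦ hitAt D y n ∩ shift n ⁻¹' E) := fun _ _ hmn ↦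
    (pairwise_disjoint_hitAt D y hmn).mono Set.inter_subset_left Set.inter_subset_left
  rw [W.P_iUnion x hmeas hdisj, H_eq_tsum, ← ENNReal.tsum_mul_right]
  exact tsum_congr fun n ↦ W.markov_property (dependsOn_mem_hitAt D y n) (fun s hs ↦ hs.2) hE

/-- The quantity `ρ_x = ∑_{b ∈ B} H_{B∪C}(x,b) σ_b` with `σ_b = P^b(T_A < T_C)`: the probability
that the walk from `x` hits `B` and afterwards returns to `A`, all before hitting `C`. -/
noncomputable def returnProb (A B C : Set Ω) (x : Ω) : ℝ≥0∞ :=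
  ∑' b : B, W.H (B ∪ C) x b * W.P b {s | hitTime A s < hitTime C s}

theorem tsum_P_firstVisitBetweenExits_le {A B C : Set Ω} {y : Ω} (hC : Disjoint (A ∪ B) C)
    (hy : y ∈ A) (x : Ω) :
    ∑' n, W.P x (firstVisitBetweenExits A (A ∪ B) y n) ≤ W.returnProb A B C x := by
  rw [← W.P_iUnion x
    (fun n ↦ measurableSet_of_dependsOn (dependsOn_mem_firstVisitBetweenExits A (A ∪ B) y n))
    (pairwise_disjoint_firstVisitBetweenExits A (A ∪ B) y)]
  refine (W.P_mono x (Set.iUnion_subset (firstVisitBetweenExits_subset hC hy))).trans ?_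
  refine (W.P_iUnion_le x _).trans (ENNReal.tsum_le_tsum fun b ↦ ?_)
  exact (W.strong_markov_hitTime _ x b (measurableSet_hitTime_lt_hitTime A C)).le

theorem P_visitBeforeExit_le (D E : Set Ω) (x y : Ω) (n : ℕ) :
    W.P x (visitBeforeExit E y n) ≤ W.P x (visitBeforeExit D y n) +
      ∑ p ∈ antidiagonal n,
        W.P x (firstVisitBetweenExits D E y p.1) * W.P y (visitBeforeExit E y p.2) := by
  refine (W.P_mono x (visitBeforeExit_subset D E y n)).trans <| (W.P_union_le x _ _).trans ?_
  gcongr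
  refine (W.P_biUnion_finset_le x _ _).trans (Finset.sum_le_sum fun p _ ↦ ?_)
  exact (W.markov_property (dependsOn_mem_firstVisitBetweenExits D E y p.1)
    (fun s hs ↦ hs.1.1) (measurableSet_of_dependsOn (dependsOn_mem_visitBeforeExit E y p.2))).le

theorem G_self_le_div_of_tsum_P_lt_one {D E : Set Ω} {y : Ω}
    (h : ∑' n, W.P y (firstVisitBetweenExits D E y n) < 1) :
    W.G E y y ≤ W.G D y y / (1 - ∑' n, W.P y (firstVisitBetweenExits D E y n)) :=
  tsum_le_div_of_renewal (fun _ ↦ W.P_ne_top y _) h (W.P_visitBeforeExit_le D E y y)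

end RandomWalk

theorem green_union_diagonal_bound_general [Countable Ω] [MeasurableSingletonClass Ω]
    (W : RandomWalk Ω) {A B C : Set Ω} (hC : Disjoint (A ∪ B) C) {a : Ω} (ha : a ∈ A)
    (hρ : W.returnProb A B C a < 1) :
    W.G (A ∪ B) a a ≤ W.G A a a / (1 - W.returnProb A B C a) := by
  have hle := W.tsum_P_firstVisitBetweenExits_le hC ha a
  calc W.G (A ∪ B) a a
      ≤ W.G A a a / (1 - ∑' n, W.P a (firstVisitBetweenExits A (A ∪ B) a n)) :=
        W.G_self_le_div_of_tsum_P_lt_one (hle.trans_lt hρ)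
    _ ≤ W.G A a a / (1 - W.returnProb A B C a) := by gcongr

/-- For `a' ∈ A` with `ρ_{a'} < 1`, `G_{A∪B}(a',a') ≤ G_A(a',a') / (1 - ρ_{a'})`,
where `ρ_{a'} = ∑_{b' ∈ B} H_{B∪C}(a',b') σ_{b'}` is the probability, starting from
`a'`, of hitting `B` and then returning to `A`, all before hitting `C`. -/
theorem green_union_diagonal_bound
    {Ω : Type*} [AddCommGroup Ω] [Countable Ω] [MeasurableSpace Ω]
    [MeasurableSingletonClass Ω] (W : RandomWalk Ω) (A B C : Set Ω)
    (hcover : A ∪ B ∪ C = Set.univ) (hAB : Disjoint A B) (hAC : Disjoint A C)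
    (hBC : Disjoint B C) (a' : Ω) (ha' : a' ∈ A)
    (ρ : ℝ≥0∞)
    (hρdef : ρ = ∑' b' : B,
      W.H (B ∪ C) a' b' * W.P b' {s | hitTime A s < hitTime C s})
    (hρ : ρ < 1) :
    W.G (A ∪ B) a' a' ≤ W.G A a' a' / (1 - ρ) :=
by
  subst hρdef
  exact green_union_diagonal_bound_general W (Set.disjoint_union_left.2 ⟨hAC, hBC⟩) ha' hρ
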